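/- arXiv:2208.06812 — 3 statements merged into one kernel-verified Lean document; each statement's English description precedes it below -/
import Mathlib

section
/- Let E be a real Banach space, P ⊆ E a cone, and (X, p) a double controlled cone metric space with respect to functions α, β : X × X → [1,∞). Suppose T : X → X satisfies p(Tx, Ty) ≼ a·p(x, Tx) + b·p(y, Ty) for all x, y ∈ X, where a, b ∈ [0,1) and a + b < 1. Fix x₀ ∈ X and set x_n = Tⁿx₀. Then p(x_n, x_{n+1}) ≼ (a/(1−b))ⁿ · p(x₀, x₁) for all n ≥ 0. -/
open Filter Topology Set

variable {E : Type*} [NormedAddCommGroup E] [NormedSpace ℝ E] [CompleteSpace E]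
variable {X : Type*}

/-- A subset `P` of a real Banach space is a cone. -/
def IsConeSet (P : Set E) : Prop :=
  IsClosed P ∧ P.Nonempty ∧ P ≠ {0} ∧
    (∀ x ∈ P, ∀ y ∈ P, ∀ a b : ℝ, 0 ≤ a → 0 ≤ b → a • x + b • y ∈ P) ∧
    P ∩ (-P) = {0}

/-- The partial order induced by the cone `P`: `x ≼ y` iff `y - x ∈ P`. -/
def coneLE (P : Set E) (x y : E) : Prop := y - x ∈ P

/-- The strict relation induced by the cone `P`: `x ≪ y` iff `y - x ∈ int P`. -/
def coneLT (P : Set E) (x y : E) : Prop := y - x ∈ interior P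

/-- `P` is a normal cone with normal constant `M`. -/
def IsNormalCone (P : Set E) (M : ℝ) : Prop :=
  0 < M ∧ ∀ x y : E, coneLE P 0 x → coneLE P x y → ‖x‖ ≤ M * ‖y‖

/-- `p` is a double controlled cone metric on `X` with respect to the control
functions `α, β : X × X → [1,∞)`, relative to the cone `P`. -/
def IsDCCM (P : Set E) (α β : X → X → ℝ) (p : X → X → E) : Prop :=
  (∀ x y : X, 1 ≤ α x y) ∧ (∀ x y : X, 1 ≤ β x y) ∧
  (∀ x y : X, coneLE P 0 (p x y)) ∧ (∀ x y : X, p x y = 0 ↔ x = y) ∧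
  (∀ x y : X, p x y = p y x) ∧
  (∀ x y z : X, coneLE P (p x y) (α x z • p x z + β z y • p z y))

/-- Convergence of a sequence in a double controlled cone metric space. -/
def DCCMConv (P : Set E) (p : X → X → E) (s : ℕ → X) (x : X) : Prop :=
  ∀ c : E, coneLT P 0 c → ∃ N : ℕ, ∀ n > N, coneLT P (p (s n) x) c

/-- Cauchy sequences in a double controlled cone metric space. -/
def DCCMCauchy (P : Set E) (p : X → X → E) (s : ℕ → X) : Prop :=
  ∀ c : E, coneLT P 0 c → ∃ N : ℕ, ∀ m > N, ∀ n > N, coneLT P (p (s m) (s n)) c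

/-- Completeness of a double controlled cone metric space. -/
def DCCMComplete (P : Set E) (p : X → X → E) : Prop :=
  ∀ s : ℕ → X, DCCMCauchy P p s → ∃ x : X, DCCMConv P p s x

theorem le_pow_smul_of_forall_succ_le_smul {M F : Type*} [MonoidWithZero M] [Preorder M]
    [Preorder F] [MulAction M F] [PosSMulMono M F] {k : M} (hk : 0 ≤ k) {u : ℕ → F}
    (hu : ∀ n, u (n + 1) ≤ k • u n) (n : ℕ) : u n ≤ k ^ n • u 0 := by
  induction n with
  | zero => rw [pow_zero, one_smul]
  | succ n ih =>
    calc u (n + 1) ≤ k • u n := hu n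
      _ ≤ k • k ^ n • u 0 := smul_le_smul_of_nonneg_left ih hk
      _ = k ^ (n + 1) • u 0 := by rw [pow_succ', mul_smul]

section OrderedModule

variable {𝕜 F : Type*} [Field 𝕜] [LinearOrder 𝕜] [IsStrictOrderedRing 𝕜]
  [AddCommGroup F] [Preorder F] [IsOrderedAddMonoid F] [Module 𝕜 F] [PosSMulMono 𝕜 F]

theorem le_div_one_sub_smul_of_le_smul_add_smul {a b : 𝕜} (hb : b < 1) {x y : F}
    (h : y ≤ a • x + b • y) : y ≤ (a / (1 - b)) • x := by
  have h_pos : 0 < 1 - b := sub_pos.2 hb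
  have h_sub : (1 - b) • y ≤ a • x := by
    rwa [sub_smul, one_smul, sub_le_iff_le_add]
  calc y = (1 - b)⁻¹ • (1 - b) • y := (inv_smul_smul₀ h_pos.ne' y).symm
    _ ≤ (1 - b)⁻¹ • a • x := smul_le_smul_of_nonneg_left h_sub (inv_nonneg.2 h_pos.le)
    _ = (a / (1 - b)) • x := by rw [smul_smul, div_eq_inv_mul]

theorem picard_iterates_kannan_general {p : X → X → F} {T : X → X} {a b : 𝕜}
    (ha : 0 ≤ a) (hb : b < 1)
    (hT : ∀ x y, p (T x) (T y) ≤ a • p x (T x) + b • p y (T y)) (x₀ : X) (n : ℕ) :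
    p (T^[n] x₀) (T^[n + 1] x₀) ≤ (a / (1 - b)) ^ n • p x₀ (T x₀) := by
  have h_step (m : ℕ) : p (T^[m + 1] x₀) (T^[m + 2] x₀) ≤
      (a / (1 - b)) • p (T^[m] x₀) (T^[m + 1] x₀) := by
    simp only [Function.iterate_succ_apply']
    exact le_div_one_sub_smul_of_le_smul_add_smul hb (hT (T^[m] x₀) (T (T^[m] x₀)))
  exact le_pow_smul_of_forall_succ_le_smul (u := fun m ↦ p (T^[m] x₀) (T^[m + 1] x₀))
    (div_nonneg ha (sub_nonneg.2 hb.le)) h_step n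

end OrderedModule

namespace IsConeSet

variable {F : Type*} [NormedAddCommGroup F] [NormedSpace ℝ F] {P : Set F}

/-- A cone in the sense of `IsConeSet`, bundled as a Mathlib pointed cone so that the order it
induces is available. -/
def toPointedCone (hP : IsConeSet P) : PointedCone ℝ F :=
  .ofConeComb P hP.2.1 fun x hx y hy a ha b hb ↦ hP.2.2.2.1 x hx y hy a b ha hb

theorem salient_toPointedCone (hP : IsConeSet P) :
    (hP.toPointedCone : ConvexCone ℝ F).Salient :=
  hP.toPointedCone.salient_iff_inter_neg_eq_singleton.2 hP.2.2.2.2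

/-- The order `coneLE P` on `F`, with `≤` definitionally equal to `coneLE P`. It is not an instance,
since it depends on the cone. -/
abbrev partialOrder (hP : IsConeSet P) : PartialOrder F :=
  (hP.toPointedCone : ConvexCone ℝ F).toPartialOrder
    hP.toPointedCone.pointed_toConvexCone hP.salient_toPointedCone

theorem isOrderedAddMonoid (hP : IsConeSet P) :
    let _ := hP.partialOrder
    IsOrderedAddMonoid F :=
  ConvexCone.to_isOrderedAddMonoid _ _ _

theorem isOrderedModule (hP : IsConeSet P) :
    let _ := hP.partialOrder
    IsOrderedModule ℝ F :=
  let _ := hP.partialOrder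
  have := hP.isOrderedAddMonoid
  hP.toPointedCone.to_isOrderedModule fun _ _ ↦ Iff.rfl

end IsConeSet

/-- For a Kannan-type contraction, the Picard iterates satisfy
`p(xₙ, xₙ₊₁) ≼ (a/(1-b))ⁿ • p(x₀, x₁)`. -/
theorem picard_iterates_kannan
    [Nonempty X] (P : Set E) (hP : IsConeSet P)
    (α β : X → X → ℝ) (p : X → X → E) (hp : IsDCCM P α β p)
    (T : X → X) (a b : ℝ) (ha0 : 0 ≤ a) (ha1 : a < 1) (hb0 : 0 ≤ b) (hb1 : b < 1)
    (hab : a + b < 1)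
    (hT : ∀ x y : X, coneLE P (p (T x) (T y)) (a • p x (T x) + b • p y (T y)))
    (x0 : X) (xs : ℕ → X) (hxs : ∀ n, xs n = T^[n] x0) :
    ∀ n : ℕ, coneLE P (p (xs n) (xs (n + 1)))
      ((a / (1 - b)) ^ n • p (xs 0) (xs 1)) := by
  let _ := hP.partialOrder
  have := hP.isOrderedAddMonoid
  have := hP.isOrderedModule
  simp only [hxs]
  exact picard_iterates_kannan_general (p := p) (T := T) ha0 hb1 hT x0
end

section
/- Let E be a real Banach space, P ⊆ E a cone, and (X, p) a double controlled cone metric space with respect to functions α, β : X × X → [1,∞). Let (x_n) be any sequence in X. Then for all integers m > n + 1, p(x_n, x_m) ≼ α(x_n, x_{n+1})·p(x_n, x_{n+1}) + Σ_{i=n+1}^{m−2} (Π_{j=n+1}^{i} β(x_j, x_m)) · α(x_i, x_{i+1}) · p(x_i, x_{i+1}) + (Π_{k=n+1}^{m−1} β(x_k, x_m)) · p(x_{m−1}, x_m). -/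
open Filter Topology Set

variable {E : Type*} [NormedAddCommGroup E] [NormedSpace ℝ E] [CompleteSpace E]
variable {X : Type*}

/-!
Write `d i = p (s i) (s m)`, `a i = α (s i) (s (i + 1)) • p (s i) (s (i + 1))` and
`b i = β (s i) (s m)`. The triangle inequality through `s (i + 1)` says that the defect
`a i + b (i + 1) • d (i + 1) - d i` lies in the cone. Weighting the defects by the nonnegative
factors `b (n + 1) ⋯ b i` makes the `d`-terms telescope, so the difference of the two sides of the
extended inequality is a nonnegative combination of elements of the cone.
-/

section

variable {R V : Type*} [CommRing R] [AddCommGroup V] [Module R V]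

theorem sum_Ico_prod_Ioc_smul_add_smul_sub (a d : ℕ → V) (b : ℕ → R) {n m : ℕ} (hnm : n ≤ m) :
    ∑ i ∈ Finset.Ico n m, (∏ j ∈ Finset.Ioc n i, b j) • (a i + b (i + 1) • d (i + 1) - d i) =
      ∑ i ∈ Finset.Ico n m, (∏ j ∈ Finset.Ioc n i, b j) • a i
        + (∏ j ∈ Finset.Ioc n m, b j) • d m - d n := by
  let f : ℕ → V := fun i => (∏ j ∈ Finset.Ioc n i, b j) • d i
  have summand_eq : ∀ i ∈ Finset.Ico n m,
      (∏ j ∈ Finset.Ioc n i, b j) • (a i + b (i + 1) • d (i + 1) - d i) =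
        (∏ j ∈ Finset.Ioc n i, b j) • a i + (f (i + 1) - f i) := by
    intro i hi
    simp only [f, Finset.prod_Ioc_succ_top (Finset.mem_Ico.mp hi).1]
    module
  have f_self : f n = d n := by simp [f]
  rw [Finset.sum_congr rfl summand_eq, Finset.sum_add_distrib, Finset.sum_Ico_sub f hnm, f_self,
    add_sub_assoc]

variable [PartialOrder R] [IsOrderedRing R]

theorem sum_Ico_prod_Ioc_smul_add_prod_smul_sub_mem (C : PointedCone R V) {a d : ℕ → V} {b : ℕ → R}
    {n m : ℕ} (hnm : n ≤ m) (hb : ∀ j ∈ Finset.Ioo n m, 0 ≤ b j)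
    (hstep : ∀ i ∈ Finset.Ico n m, a i + b (i + 1) • d (i + 1) - d i ∈ C) :
    ∑ i ∈ Finset.Ico n m, (∏ j ∈ Finset.Ioc n i, b j) • a i
      + (∏ j ∈ Finset.Ioc n m, b j) • d m - d n ∈ C := by
  rw [← sum_Ico_prod_Ioc_smul_add_smul_sub a d b hnm]
  refine C.sum_mem fun i hi => C.smul_mem (Finset.prod_nonneg fun j hj => ?_) (hstep i hi)
  obtain ⟨hnj, hji⟩ := Finset.mem_Ioc.mp hj
  exact hb j (Finset.mem_Ioo.mpr ⟨hnj, hji.trans_lt (Finset.mem_Ico.mp hi).2⟩)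

theorem extended_triangle_inequality_general (C : PointedCone R V) {α β : X → X → R}
    {p : X → X → V} (hβ : ∀ x y, 0 ≤ β x y)
    (triangle : ∀ x y z, α x z • p x z + β z y • p z y - p x y ∈ C) (s : ℕ → X) :
    ∀ m n : ℕ, n + 1 < m →
      α (s n) (s (n + 1)) • p (s n) (s (n + 1))
        + ∑ i ∈ Finset.Icc (n + 1) (m - 2),
            ((∏ j ∈ Finset.Icc (n + 1) i, β (s j) (s m)) * α (s i) (s (i + 1)))
              • p (s i) (s (i + 1))
        + (∏ k ∈ Finset.Icc (n + 1) (m - 1), β (s k) (s m)) • p (s (m - 1)) (s m)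
        - p (s n) (s m) ∈ C := by
  intro m n hnm
  have mem := sum_Ico_prod_Ioc_smul_add_prod_smul_sub_mem C
    (a := fun i => α (s i) (s (i + 1)) • p (s i) (s (i + 1)))
    (d := fun i => p (s i) (s m)) (b := fun j => β (s j) (s m)) (n := n) (m := m - 1) (by lia)
    (fun j _ => hβ (s j) (s m)) (fun i _ => triangle (s i) (s m) (s (i + 1)))
  have Ico_eq_Icc : Finset.Ico (n + 1) (m - 1) = Finset.Icc (n + 1) (m - 2) := by
    ext i
    simp only [Finset.mem_Ico, Finset.mem_Icc]
    lia
  rw [Finset.sum_eq_sum_Ico_succ_bot (by lia), Ico_eq_Icc, Finset.Ioc_self,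
    Finset.prod_empty, one_smul] at mem
  simpa only [Finset.Icc_add_one_left_eq_Ioc, mul_smul] using mem

end

/-- A cone `P` in the sense of `IsConeSet`, bundled as a `PointedCone`; closedness and salience are
forgotten. -/
def IsConeSet.toPointedCone_s12 {P : Set E} (hP : IsConeSet P) : PointedCone ℝ E where
  carrier := P
  zero_mem' := by
    obtain ⟨-, ⟨x, hx⟩, -, smul_add_smul_mem, -⟩ := hP
    simpa using smul_add_smul_mem x hx x hx 0 0 le_rfl le_rfl
  add_mem' {x y} hx hy := by
    obtain ⟨-, -, -, smul_add_smul_mem, -⟩ := hP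
    simpa using smul_add_smul_mem x hx y hy 1 1 zero_le_one zero_le_one
  smul_mem' c x hx := by
    obtain ⟨-, -, -, smul_add_smul_mem, -⟩ := hP
    simpa using smul_add_smul_mem x hx x hx c 0 c.2 le_rfl

/-- The extended triangle-type inequality along a sequence in a double
controlled cone metric space. -/
theorem extended_triangle_inequality
    [Nonempty X] (P : Set E) (hP : IsConeSet P)
    (α β : X → X → ℝ) (p : X → X → E) (hp : IsDCCM P α β p)
    (s : ℕ → X) :
    ∀ m n : ℕ, n + 1 < m →
      coneLE P (p (s n) (s m))
        (α (s n) (s (n + 1)) • p (s n) (s (n + 1))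
          + ∑ i ∈ Finset.Icc (n + 1) (m - 2),
              ((∏ j ∈ Finset.Icc (n + 1) i, β (s j) (s m)) * α (s i) (s (i + 1)))
                • p (s i) (s (i + 1))
          + (∏ k ∈ Finset.Icc (n + 1) (m - 1), β (s k) (s m)) • p (s (m - 1)) (s m)) := by
  obtain ⟨-, one_le_β, -, -, -, triangle⟩ := hp
  exact extended_triangle_inequality_general hP.toPointedCone_s12
    (fun x y => zero_le_one.trans (one_le_β x y)) triangle s
end

section
/- Let E = ℝ², P = {(u, v) ∈ ℝ² : u ≥ 0 and v ≥ 0}, and X = {(x, 0) : 0 ≤ x ≤ 1} ∪ {(0, x) : 0 ≤ x ≤ 1} ⊆ ℝ². Define p : X × X → ℝ² by p((x,0),(y,0)) = ((4/3)|x − y|, |x − y|), p((0,x),(0,y)) = (|x − y|, (2/3)|x − y|), and p((x,0),(0,y)) = p((0,y),(x,0)) = ((4/3)x + y, x + (2/3)y). Then p is a cone metric on X with respect to the cone P: p(X,Y) ∈ P with p(X,Y) = 0 iff X = Y, p(X,Y) = p(Y,X), and p(X,Y) ≼ p(X,Z) + p(Z,Y) for all X, Y, Z ∈ X; consequently p is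 a double controlled cone metric with respect to any functions α, β : X × X → [1,∞). -/
open Filter Topology Set

/-- The positive cone in `ℝ²`. -/
def conePos : Set (ℝ × ℝ) := {v | 0 ≤ v.1 ∧ 0 ≤ v.2}

/-- The order `u ≼ v` on `ℝ²` induced by the cone `conePos`. -/
def coneLE2 (u v : ℝ × ℝ) : Prop := v - u ∈ conePos

/-- The set `X = {(x,0) : 0 ≤ x ≤ 1} ∪ {(0,x) : 0 ≤ x ≤ 1}` of Example 2. -/
def XEx : Set (ℝ × ℝ) :=
  {v | (0 ≤ v.1 ∧ v.1 ≤ 1 ∧ v.2 = 0) ∨ (v.1 = 0 ∧ 0 ≤ v.2 ∧ v.2 ≤ 1)}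

/-!
The three cases defining `p` are one formula: with `a = (4/3, 1)` and `b = (1, 2/3)`,
`p u v = |u₁ - v₁| • a + |u₂ - v₂| • b` on the two segments, because the distance between points of
different segments is measured through their common point. A combination of two distances with
positive vectors as coefficients inherits all the axioms of a cone metric from them.
-/

section ConeMetric

variable {Z E : Type*} [AddCommGroup E] [PartialOrder E]

/-- `p` is a cone metric on the subset `s` of `Z`. The cone enters as the set of nonnegative
elements of the ordered vector space `E`. -/
structure IsConeMetricOn (p : Z → Z → E) (s : Set Z) : Prop where
  nonneg : ∀ ⦃u⦄, u ∈ s → ∀ ⦃v⦄, v ∈ s → 0 ≤ p u v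
  eq_zero_iff : ∀ ⦃u⦄, u ∈ s → ∀ ⦃v⦄, v ∈ s → (p u v = 0 ↔ u = v)
  comm : ∀ ⦃u⦄, u ∈ s → ∀ ⦃v⦄, v ∈ s → p u v = p v u
  triangle : ∀ ⦃u⦄, u ∈ s → ∀ ⦃v⦄, v ∈ s → ∀ ⦃w⦄, w ∈ s → p u v ≤ p u w + p w v

namespace IsConeMetricOn

variable {p q : Z → Z → E} {s : Set Z}

theorem congr (hq : IsConeMetricOn q s) (hpq : ∀ u ∈ s, ∀ v ∈ s, p u v = q u v) :
    IsConeMetricOn p s where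
  nonneg u hu v hv := by simpa only [hpq u hu v hv] using hq.nonneg hu hv
  eq_zero_iff u hu v hv := by simpa only [hpq u hu v hv] using hq.eq_zero_iff hu hv
  comm u hu v hv := by simpa only [hpq u hu v hv, hpq v hv u hu] using hq.comm hu hv
  triangle u hu v hv w hw := by
    simpa only [hpq u hu v hv, hpq u hu w hw, hpq w hw v hv] using hq.triangle hu hv hw

theorem le_smul_add_smul [IsOrderedAddMonoid E] [Module ℝ E] [SMulPosMono ℝ E]
    (hp : IsConeMetricOn p s) {u v w : Z} (hu : u ∈ s) (hv : v ∈ s) (hw : w ∈ s)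
    {r t : ℝ} (hr : 1 ≤ r) (ht : 1 ≤ t) :
    p u v ≤ r • p u w + t • p w v :=
  calc p u v ≤ p u w + p w v := hp.triangle hu hv hw
    _ ≤ r • p u w + t • p w v :=
      add_le_add (le_smul_of_one_le_left (hp.nonneg hu hw) hr)
        (le_smul_of_one_le_left (hp.nonneg hw hv) ht)

end IsConeMetricOn

end ConeMetric

section WeightedDist

variable {X Y E : Type*} [AddCommGroup E] [Module ℝ E]

/-- The vector-valued `ℓ¹` distance on `X × Y` in which distances in `X` are multiplied by the
vector `a` and distances in `Y` by the vector `b`. -/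
def weightedDist [Dist X] [Dist Y] (a b : E) (u v : X × Y) : E :=
  dist u.1 v.1 • a + dist u.2 v.2 • b

section PseudoMetricSpace

variable [PseudoMetricSpace X] [PseudoMetricSpace Y]

theorem weightedDist_comm (a b : E) (u v : X × Y) :
    weightedDist a b u v = weightedDist a b v u := by
  simp only [weightedDist, dist_comm]

theorem eq_weightedDist_of_mem_wedge {p : X × Y → X × Y → E} {a b : E} {s : Set X} {t : Set Y}
    {x₀ : X} {y₀ : Y}
    (h_left : ∀ x ∈ s, ∀ x' ∈ s, p (x, y₀) (x', y₀) = dist x x' • a)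
    (h_right : ∀ y ∈ t, ∀ y' ∈ t, p (x₀, y) (x₀, y') = dist y y' • b)
    (h_cross : ∀ x ∈ s, ∀ y ∈ t, p (x, y₀) (x₀, y) = dist x x₀ • a + dist y y₀ • b ∧
      p (x₀, y) (x, y₀) = dist x x₀ • a + dist y y₀ • b) :
    ∀ u ∈ s ×ˢ {y₀} ∪ {x₀} ×ˢ t, ∀ v ∈ s ×ˢ {y₀} ∪ {x₀} ×ˢ t, p u v = weightedDist a b u v := by
  rintro ⟨x, y⟩ (⟨hx, rfl⟩ | ⟨rfl, hy⟩) ⟨x', y'⟩ (⟨hx', rfl⟩ | ⟨rfl, hy'⟩)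
  · simp [weightedDist, h_left x hx x' hx']
  · simp [weightedDist, (h_cross x hx y' hy').1, dist_comm]
  · simp [weightedDist, (h_cross x' hx' y hy).2, dist_comm]
  · simp [weightedDist, h_right y hy y' hy']

variable [PartialOrder E] [IsOrderedAddMonoid E] {a b : E}

theorem weightedDist_nonneg [PosSMulMono ℝ E] (ha : 0 ≤ a) (hb : 0 ≤ b) (u v : X × Y) :
    0 ≤ weightedDist a b u v :=
  add_nonneg (smul_nonneg dist_nonneg ha) (smul_nonneg dist_nonneg hb)

theorem weightedDist_triangle [SMulPosMono ℝ E] (ha : 0 ≤ a) (hb : 0 ≤ b) (u w v : X × Y) :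
    weightedDist a b u v ≤ weightedDist a b u w + weightedDist a b w v :=
  calc weightedDist a b u v
      ≤ (dist u.1 w.1 + dist w.1 v.1) • a + (dist u.2 w.2 + dist w.2 v.2) • b :=
        add_le_add (smul_le_smul_of_nonneg_right (dist_triangle _ _ _) ha)
          (smul_le_smul_of_nonneg_right (dist_triangle _ _ _) hb)
    _ = weightedDist a b u w + weightedDist a b w v := by
        simp only [weightedDist, add_smul, add_add_add_comm]

end PseudoMetricSpace

variable [MetricSpace X] [MetricSpace Y] [PartialOrder E] [IsOrderedAddMonoid E] {a b : E}

theorem weightedDist_eq_zero_iff [PosSMulMono ℝ E] (ha : 0 < a) (hb : 0 < b) {u v : X × Y} :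
    weightedDist a b u v = 0 ↔ u = v := by
  rw [weightedDist, add_eq_zero_iff_of_nonneg (smul_nonneg dist_nonneg ha.le)
    (smul_nonneg dist_nonneg hb.le), smul_eq_zero_iff_left ha.ne', smul_eq_zero_iff_left hb.ne',
    dist_eq_zero, dist_eq_zero, Prod.ext_iff]

theorem isConeMetricOn_weightedDist [IsOrderedModule ℝ E] (ha : 0 < a) (hb : 0 < b)
    (s : Set (X × Y)) : IsConeMetricOn (weightedDist a b) s where
  nonneg u _ v _ := weightedDist_nonneg ha.le hb.le u v
  eq_zero_iff _ _ _ _ := weightedDist_eq_zero_iff ha hb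
  comm u _ v _ := weightedDist_comm a b u v
  triangle u _ v _ w _ := weightedDist_triangle ha.le hb.le u w v

theorem pAxes_coneMetric_general [IsOrderedModule ℝ E] {p : X × Y → X × Y → E} {s : Set X}
    {t : Set Y} {x₀ : X} {y₀ : Y} (ha : 0 < a) (hb : 0 < b)
    (h_left : ∀ x ∈ s, ∀ x' ∈ s, p (x, y₀) (x', y₀) = dist x x' • a)
    (h_right : ∀ y ∈ t, ∀ y' ∈ t, p (x₀, y) (x₀, y') = dist y y' • b)
    (h_cross : ∀ x ∈ s, ∀ y ∈ t, p (x, y₀) (x₀, y) = dist x x₀ • a + dist y y₀ • b ∧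
      p (x₀, y) (x, y₀) = dist x x₀ • a + dist y y₀ • b) :
    IsConeMetricOn p (s ×ˢ {y₀} ∪ {x₀} ×ˢ t) :=
  (isConeMetricOn_weightedDist ha hb _).congr (eq_weightedDist_of_mem_wedge h_left h_right h_cross)

end WeightedDist

theorem mem_conePos_iff {v : ℝ × ℝ} : v ∈ conePos ↔ 0 ≤ v :=
  Iff.rfl

theorem coneLE2_iff_le {u v : ℝ × ℝ} : coneLE2 u v ↔ u ≤ v :=
  mem_conePos_iff.trans sub_nonneg

theorem XEx_eq_union : XEx = Icc 0 1 ×ˢ {0} ∪ {0} ×ˢ Icc 0 1 := by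
  ext v
  simp only [XEx, mem_ofPred_eq, mem_union, mem_prod, mem_Icc, mem_singleton_iff, and_assoc]

/-- The map `p` of Example 2 is a cone metric on `X` with respect to the
positive cone of `ℝ²`; consequently it is a double controlled cone metric with
respect to any control functions `α, β : X × X → [1,∞)`. -/
theorem pAxes_coneMetric (p : ℝ × ℝ → ℝ × ℝ → ℝ × ℝ)
    (hp1 : ∀ x y : ℝ, 0 ≤ x → x ≤ 1 → 0 ≤ y → y ≤ 1 →
      p (x, 0) (y, 0) = (4 / 3 * |x - y|, |x - y|))
    (hp2 : ∀ x y : ℝ, 0 ≤ x → x ≤ 1 → 0 ≤ y → y ≤ 1 →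
      p (0, x) (0, y) = (|x - y|, 2 / 3 * |x - y|))
    (hp3 : ∀ x y : ℝ, 0 ≤ x → x ≤ 1 → 0 ≤ y → y ≤ 1 →
      p (x, 0) (0, y) = (4 / 3 * x + y, x + 2 / 3 * y) ∧
      p (0, y) (x, 0) = (4 / 3 * x + y, x + 2 / 3 * y)) :
    (∀ u ∈ XEx, ∀ v ∈ XEx,
      p u v ∈ conePos ∧ (p u v = 0 ↔ u = v) ∧ p u v = p v u) ∧
    (∀ u ∈ XEx, ∀ v ∈ XEx, ∀ w ∈ XEx, coneLE2 (p u v) (p u w + p w v)) ∧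
    (∀ α β : ℝ × ℝ → ℝ × ℝ → ℝ, (∀ u v, 1 ≤ α u v) → (∀ u v, 1 ≤ β u v) →
      ∀ u ∈ XEx, ∀ v ∈ XEx, ∀ w ∈ XEx,
        coneLE2 (p u v) (α u w • p u w + β w v • p w v)) := by
  have hp : IsConeMetricOn p XEx := by
    rw [XEx_eq_union]
    refine pAxes_coneMetric_general (a := (4 / 3, 1)) (b := (1, 2 / 3))
      (Prod.mk_lt_mk.2 (by norm_num)) (Prod.mk_lt_mk.2 (by norm_num)) ?_ ?_ ?_
    · rintro x ⟨hx, hx'⟩ y ⟨hy, hy'⟩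
      simp [hp1 x y hx hx' hy hy', Real.dist_eq, mul_comm]
    · rintro x ⟨hx, hx'⟩ y ⟨hy, hy'⟩
      simp [hp2 x y hx hx' hy hy', Real.dist_eq, mul_comm]
    · rintro x ⟨hx, hx'⟩ y ⟨hy, hy'⟩
      simp [hp3 x y hx hx' hy hy', abs_of_nonneg hx, abs_of_nonneg hy, mul_comm]
  simp only [mem_conePos_iff, coneLE2_iff_le]
  exact ⟨fun u hu v hv => ⟨hp.nonneg hu hv, hp.eq_zero_iff hu hv, hp.comm hu hv⟩,
    fun u hu v hv w hw => hp.triangle hu hv hw,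
    fun α β hα hβ u hu v hv w hw => hp.le_smul_add_smul hu hv hw (hα u w) (hβ w v)⟩
end
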